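/- arXiv:1811.09274 — 4 statements merged into one kernel-verified Lean document; each statement's English description precedes it below -/
import Mathlib

section
/- Let n ≥ 1 and p = 2n+1. Suppose differentiable functions w_0,…,w_{p−1} : ℂ → ℂ and constants a_0,…,a_{p−1} ∈ ℂ (indices taken mod p) satisfy the p-cyclic dressing chain equations (w_i + w_{i+1})′(z) + w_{i+1}(z)² − w_i(z)² = a_i for all z ∈ ℂ and all i, set Δ := −(a_0 + ⋯ + a_{p−1}) and assume Δ ≠ 0 and that ∑_{i=0}^{p−1} w_i(z) = −(Δ/2)·z for all z ∈ ℂ. Let c ∈ ℂ satisfy c² = −1/Δ and define f_i(z) := c·(w_i(cz) + w_{i+1}(cz)) and α_i := c²·a_i. Then for every i and every z ∈ ℂ: f_i′(z) + f_i(z)·(∑_{j=1}^n f_{i+2j−1}(z) − ∑_{j=1}^n f_{i+2j}(z)) = α_i; moreover ∑_{i=0}^{2n} f_i(z) = z for all z and ∑_{i=0}^{2n} α_i = 1. -/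
/-- A `(2n+1)`-cyclic Darboux dressing chain with shift `Δ ≠ 0`,
after the rescaling `f_i(z) = c (w_i(cz) + w_{i+1}(cz))`, `α_i = c² a_i` with
`c² = -1/Δ`, yields a solution of the `A_{2n}`-Painlevé system with the
normalization `∑ f_i(z) = z`, `∑ α_i = 1`. -/
theorem dressing_chain_to_A2n_painleve (n : ℕ) (hn : 1 ≤ n)
    (w : ZMod (2 * n + 1) → ℂ → ℂ) (a : ZMod (2 * n + 1) → ℂ)
    (hw : ∀ i, Differentiable ℂ (w i))
    (hchain : ∀ i, ∀ z : ℂ,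
      deriv (fun z => w i z + w (i + 1) z) z + (w (i + 1) z) ^ 2 - (w i z) ^ 2 = a i)
    (Δ : ℂ) (hΔdef : Δ = -∑ i, a i) (hΔ : Δ ≠ 0)
    (hsum : ∀ z : ℂ, ∑ i, w i z = -(Δ / 2) * z)
    (c : ℂ) (hc : c ^ 2 = -1 / Δ)
    (f : ZMod (2 * n + 1) → ℂ → ℂ)
    (hf : ∀ i, f i = fun z => c * (w i (c * z) + w (i + 1) (c * z)))
    (α : ZMod (2 * n + 1) → ℂ) (hα : ∀ i, α i = c ^ 2 * a i) :
    (∀ i, ∀ z : ℂ,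
      deriv (f i) z + f i z *
        ((∑ j ∈ Finset.range n, f (i + ((2 * j + 1 : ℕ) : ZMod (2 * n + 1))) z) -
         (∑ j ∈ Finset.range n, f (i + ((2 * j + 2 : ℕ) : ZMod (2 * n + 1))) z)) = α i)
    ∧ (∀ z : ℂ, ∑ i, f i z = z)
    ∧ (∑ i, α i = 1) := by
  have hcΔ : c ^ 2 * Δ = -1 := by rw [hc]; field_simp
  refine ⟨?_, ?_, ?_⟩
  · intro i z
    have tele : ∀ m : ℕ,
        (∑ j ∈ Finset.range m, f (i + ((2 * j + 1 : ℕ) : ZMod (2 * n + 1))) z) -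
        (∑ j ∈ Finset.range m, f (i + ((2 * j + 2 : ℕ) : ZMod (2 * n + 1))) z)
        = c * (w (i + 1) (c * z) - w (i + ((2 * m + 1 : ℕ) : ZMod (2 * n + 1))) (c * z)) := by
      intro m
      induction m with
      | zero => simp
      | succ k ih =>
        rw [Finset.sum_range_succ, Finset.sum_range_succ, add_sub_add_comm, ih, hf, hf]
        have e1 : i + ((2 * k + 1 : ℕ) : ZMod (2 * n + 1)) + 1
            = i + ((2 * k + 2 : ℕ) : ZMod (2 * n + 1)) := by push_cast; ring
        have e2 : i + ((2 * k + 2 : ℕ) : ZMod (2 * n + 1)) + 1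
            = i + ((2 * (k + 1) + 1 : ℕ) : ZMod (2 * n + 1)) := by push_cast; ring
        simp only [e1, e2]
        ring
    rw [tele n, ZMod.natCast_self, add_zero, hα, ← hchain i (c * z)]
    have hd : HasDerivAt (fun z => w i z + w (i + 1) z)
        (deriv (fun z => w i z + w (i + 1) z) (c * z)) (c * z) :=
      (((hw i).add (hw (i + 1))) (c * z)).hasDerivAt
    have hl : HasDerivAt (fun z : ℂ => c * z) c z := by
      simpa using (hasDerivAt_id z).const_mul c
    have h2 : deriv (f i) z = c * (deriv (fun z => w i z + w (i + 1) z) (c * z) * c) := by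
      rw [hf]
      exact ((hd.comp z hl).const_mul c).deriv
    rw [h2, hf]
    ring
  · intro z
    have hs : ∑ i, w (i + 1) (c * z) = ∑ i, w i (c * z) :=
      Equiv.sum_comp (Equiv.addRight (1 : ZMod (2 * n + 1))) (fun i => w i (c * z))
    simp only [hf]
    rw [← Finset.mul_sum, Finset.sum_add_distrib, hs, hsum]
    linear_combination (-z) * hcΔ
  · simp only [hα]
    rw [← Finset.mul_sum]
    linear_combination (-1 : ℂ) * hcΔ + c ^ 2 * hΔdef
end

section
/- Let n ≥ 1 and p = 2n+1. Suppose differentiable functions w_0,…,w_{p−1} : ℂ → ℂ and constants a_0,…,a_{p−1} ∈ ℂ (indices taken mod p) satisfy the p-cyclic dressing chain equations (w_i + w_{i+1})′(z) + w_{i+1}(z)² − w_i(z)² = a_i for all z ∈ ℂ and all i. Define f_i := w_i + w_{i+1} (indices mod p). Then for every i and every z ∈ ℂ: f_i′(z) + f_i(z)·(∑_{j=1}^n f_{i+2j−1}(z) − ∑_{j=1}^n f_{i+2j}(z)) = a_i. -/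
/-- If `w_0, …, w_{2n}` satisfy the `(2n+1)`-cyclic dressing chain
equations with constants `a_i`, then `f_i := w_i + w_{i+1}` satisfies the
`A_{2n}`-Painlevé equations with parameters `a_i`. -/
theorem dressing_chain_gives_painleve_equations (n : ℕ) (hn : 1 ≤ n)
    (w : ZMod (2 * n + 1) → ℂ → ℂ) (a : ZMod (2 * n + 1) → ℂ)
    (hw : ∀ i, Differentiable ℂ (w i))
    (hchain : ∀ i, ∀ z : ℂ,
      deriv (fun z => w i z + w (i + 1) z) z + (w (i + 1) z) ^ 2 - (w i z) ^ 2 = a i)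
    (f : ZMod (2 * n + 1) → ℂ → ℂ)
    (hf : ∀ i, f i = fun z => w i z + w (i + 1) z) :
    ∀ i, ∀ z : ℂ,
      deriv (f i) z + f i z *
        ((∑ j ∈ Finset.range n, f (i + ((2 * j + 1 : ℕ) : ZMod (2 * n + 1))) z) -
         (∑ j ∈ Finset.range n, f (i + ((2 * j + 2 : ℕ) : ZMod (2 * n + 1))) z)) = a i := by
  intro i z
  have key : (∑ j ∈ Finset.range n, f (i + ((2 * j + 1 : ℕ) : ZMod (2 * n + 1))) z) -
      (∑ j ∈ Finset.range n, f (i + ((2 * j + 2 : ℕ) : ZMod (2 * n + 1))) z)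
      = w (i + 1) z - w i z := by
    rw [← Finset.sum_sub_distrib]
    have h1 : ∀ j ∈ Finset.range n, f (i + ((2 * j + 1 : ℕ) : ZMod (2 * n + 1))) z -
        f (i + ((2 * j + 2 : ℕ) : ZMod (2 * n + 1))) z
        = w (i + ((2 * j + 1 : ℕ) : ZMod (2 * n + 1))) z -
          w (i + ((2 * (j + 1) + 1 : ℕ) : ZMod (2 * n + 1))) z := by
      intro j _
      have e1 : i + ((2 * j + 1 : ℕ) : ZMod (2 * n + 1)) + 1
          = i + ((2 * j + 2 : ℕ) : ZMod (2 * n + 1)) := by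
        push_cast; ring
      have e2 : i + ((2 * j + 2 : ℕ) : ZMod (2 * n + 1)) + 1
          = i + ((2 * (j + 1) + 1 : ℕ) : ZMod (2 * n + 1)) := by
        push_cast; ring
      simp only [hf]
      rw [e1, e2]
      ring
    rw [Finset.sum_congr rfl h1,
      Finset.sum_range_sub' (fun j => w (i + ((2 * j + 1 : ℕ) : ZMod (2 * n + 1))) z) n,
      ZMod.natCast_self]
    simp
  rw [key, ← hchain i z, hf i]
  ring
end

section
/- For every finite set β ⊆ ℤ, Ξ(β) is a Maya diagram if and only if β has odd cardinality; moreover every Maya diagram M has a unique representation M = Ξ(β) with β ⊆ ℤ finite, and this unique β has odd cardinality 2g+1 (g is called the genus of M and β its block coordinates). -/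
/-- A Maya diagram: a set of integers containing finitely many nonnegative
integers and excluding finitely many negative integers. -/
def IsMaya (M : Set ℤ) : Prop :=
  {m : ℤ | m ∈ M ∧ 0 ≤ m}.Finite ∧ {m : ℤ | m < 0 ∧ m ∉ M}.Finite

/-- `Ξ(β)`: the set of integers `m` such that the number of elements of `β`
exceeding `m` is odd.  For `β = {β₀ < β₁ < ⋯ < β_{2g}}` this is
`(-∞,β₀) ∪ [β₁,β₂) ∪ ⋯ ∪ [β_{2g-1},β_{2g})`. -/
def Xi (β : Finset ℤ) : Set ℤ := {m : ℤ | Odd (β.filter (fun b => m < b)).card}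

theorem Xi_step (β : Finset ℤ) (b : ℤ) :
    b ∈ β ↔ ¬ (b - 1 ∈ Xi β ↔ b ∈ Xi β) := by
  have h : β.filter (fun x => b - 1 < x) =
      if b ∈ β then insert b (β.filter (fun x => b < x)) else β.filter (fun x => b < x) := by
    ext x
    split_ifs with hb
    · simp only [Finset.mem_filter, Finset.mem_insert]
      constructor
      · rintro ⟨h1, h2⟩
        by_cases hx : x = b
        · exact Or.inl hx
        · exact Or.inr ⟨h1, by omega⟩
      · rintro (rfl | ⟨h1, h2⟩)
        · exact ⟨hb, by omega⟩
        · exact ⟨h1, by omega⟩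
    · simp only [Finset.mem_filter]
      constructor
      · rintro ⟨h1, h2⟩
        have hx : x ≠ b := by rintro rfl; exact hb h1
        exact ⟨h1, by omega⟩
      · rintro ⟨h1, h2⟩
        exact ⟨h1, by omega⟩
  simp only [Xi, Set.mem_setOf_eq]
  rw [h]
  split_ifs with hb
  · rw [Finset.card_insert_of_notMem (by simp)]
    simp only [hb, true_iff]
    rw [Nat.odd_add_one]
    tauto
  · simp [hb]

theorem finset_bound (β : Finset ℤ) : ∃ N : ℤ, 0 ≤ N ∧ ∀ b ∈ β, -N < b ∧ b < N := by
  obtain ⟨a, ha⟩ := β.bddAbove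
  obtain ⟨c, hc⟩ := β.bddBelow
  refine ⟨|a| + |c| + 1, by positivity, fun b hb => ?_⟩
  have h1 := ha hb
  have h2 := hc hb
  have := le_abs_self a
  have := neg_abs_le c
  have := abs_nonneg a
  have := abs_nonneg c
  constructor <;> linarith

theorem Xi_high (β : Finset ℤ) : ∃ N : ℤ, ∀ m, N ≤ m → m ∉ Xi β := by
  obtain ⟨N, -, hN⟩ := finset_bound β
  refine ⟨N, fun m hm => ?_⟩
  have : β.filter (fun b => m < b) = ∅ := by
    rw [Finset.filter_eq_empty_iff]
    intro b hb
    have := hN b hb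
    omega
  simp [Xi, this]

theorem Xi_low (β : Finset ℤ) : ∃ N : ℤ, ∀ m, m ≤ N → (m ∈ Xi β ↔ Odd β.card) := by
  obtain ⟨N, -, hN⟩ := finset_bound β
  refine ⟨-N, fun m hm => ?_⟩
  have : β.filter (fun b => m < b) = β := by
    rw [Finset.filter_eq_self]
    intro b hb
    have := hN b hb
    omega
  simp [Xi, this]

theorem isMaya_iff (M : Set ℤ) :
    IsMaya M ↔ ∃ N : ℤ, (∀ m, N ≤ m → m ∉ M) ∧ ∀ m, m ≤ -N → m ∈ M := by
  constructor
  · rintro ⟨h1, h2⟩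
    obtain ⟨N, h0, hN⟩ := finset_bound (h1.toFinset ∪ h2.toFinset)
    refine ⟨N + 1, fun m hm hM => ?_, fun m hm => ?_⟩
    · have := hN m (by simp; left; exact ⟨hM, by omega⟩)
      omega
    · by_contra hM
      have := hN m (by simp; right; exact ⟨by omega, hM⟩)
      omega
  · rintro ⟨N, h1, h2⟩
    constructor
    · apply (Set.finite_Icc 0 N).subset
      rintro m ⟨hm, h0⟩
      refine ⟨h0, ?_⟩
      by_contra h
      exact h1 m (by omega) hm
    · apply (Set.finite_Icc (-N) 0).subset
      rintro m ⟨h0, hm⟩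
      refine ⟨?_, h0.le⟩
      by_contra h
      exact hm (h2 m (by omega))

theorem Xi_maya_iff (β : Finset ℤ) : IsMaya (Xi β) ↔ Odd β.card := by
  rw [isMaya_iff]
  obtain ⟨A, hA⟩ := Xi_high β
  obtain ⟨B, hB⟩ := Xi_low β
  constructor
  · rintro ⟨N, -, h2⟩
    exact (hB (min B (-N)) (min_le_left _ _)).1 (h2 _ (min_le_right _ _))
  · intro h
    refine ⟨max A (-B), fun m hm => hA m (le_trans (le_max_left _ _) hm), fun m hm => ?_⟩
    have := le_max_right A (-B)
    exact (hB m (by omega)).2 h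

theorem Xi_exists (M : Set ℤ) (hM : IsMaya M) : ∃ β : Finset ℤ, Xi β = M := by
  obtain ⟨N, h1, h2⟩ := (isMaya_iff M).1 hM
  have hfin : {b : ℤ | ¬ (b - 1 ∈ M ↔ b ∈ M)}.Finite := by
    apply (Set.finite_Icc (-N) N).subset
    intro b hb
    by_contra h
    apply hb
    rw [Set.mem_Icc, not_and_or] at h
    rcases h with h | h
    · exact iff_of_true (h2 _ (by omega)) (h2 _ (by omega))
    · exact iff_of_false (h1 _ (by omega)) (h1 _ (by omega))
  refine ⟨hfin.toFinset, ?_⟩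
  obtain ⟨A, hA⟩ := Xi_high hfin.toFinset
  have base : ∀ m, max A N ≤ m → (m ∈ Xi hfin.toFinset ↔ m ∈ M) := fun m hm =>
    iff_of_false (hA m (le_trans (le_max_left _ _) hm)) (h1 m (le_trans (le_max_right _ _) hm))
  ext m
  rcases le_total (max A N) m with h | h
  · exact base m h
  · induction m, h using Int.le_induction_down with
    | base => exact base _ le_rfl
    | pred n hn ih =>
      have h3 := Xi_step hfin.toFinset n
      have h4 : n ∈ hfin.toFinset ↔ ¬ (n - 1 ∈ M ↔ n ∈ M) := by
        rw [Set.Finite.mem_toFinset]; rfl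
      tauto

theorem Xi_inj {β γ : Finset ℤ} (h : Xi β = Xi γ) : β = γ := by
  ext b
  rw [Xi_step β b, Xi_step γ b, h]

/-- `Ξ(β)` is a Maya diagram iff `β` has odd cardinality; moreover
every Maya diagram `M` is `Ξ(β)` for a unique finite `β`, and the unique such
`β` has odd cardinality `2g+1`. -/
theorem maya_block_coordinates :
    (∀ β : Finset ℤ, IsMaya (Xi β) ↔ Odd β.card) ∧
    (∀ M : Set ℤ, IsMaya M → ∃! β : Finset ℤ, Xi β = M) ∧
    (∀ M : Set ℤ, IsMaya M → ∀ β : Finset ℤ, Xi β = M → ∃ g : ℕ, β.card = 2 * g + 1) := by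
  refine ⟨Xi_maya_iff, fun M hM => ?_, fun M hM β hβ => ?_⟩
  · obtain ⟨β, hβ⟩ := Xi_exists M hM
    exact ⟨β, hβ, fun γ hγ => Xi_inj (hγ.trans hβ.symm)⟩
  · exact (Xi_maya_iff β).1 (hβ ▸ hM)
end

section
/- Let k ≥ 1 and let M be a Maya diagram with k-modular decomposition (M^(0),…,M^(k−1)); each M^(i) is then a Maya diagram, and let g_i ≥ 0 be such that the symmetric difference M^(i) Δ (M^(i)+1) has cardinality 2·g_i + 1 (g_i is the genus of M^(i)). Then M is (p,k)-cyclic with p = ∑_{i=0}^{k−1} (2·g_i + 1); precisely, the symmetric difference M Δ (M + k) is finite of cardinality ∑_{i=0}^{k−1} (2·g_i + 1). -/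
/-- The translate `M + t = {m + t : m ∈ M}`. -/
def shiftSet (M : Set ℤ) (t : ℤ) : Set ℤ := (fun m => m + t) '' M

/-- The interlacing `Θ(M⁽⁰⁾, …, M⁽ᵏ⁻¹⁾) = ⋃ᵢ (k·M⁽ⁱ⁾ + i)`. -/
def interlace (k : ℕ) (Ms : Fin k → Set ℤ) : Set ℤ :=
  ⋃ i : Fin k, {n : ℤ | ∃ m ∈ Ms i, n = (k : ℤ) * m + (i.val : ℤ)}

/-- The `i`-th component of the `k`-modular decomposition of `M`. -/
def modDecomp (k : ℕ) (M : Set ℤ) (i : Fin k) : Set ℤ :=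
  {m : ℤ | (k : ℤ) * m + (i.val : ℤ) ∈ M}

/-- if `M` is a Maya diagram with `k`-modular decomposition
`(M⁽⁰⁾,…,M⁽ᵏ⁻¹⁾)`, each of genus `gᵢ` (i.e. `#(M⁽ⁱ⁾ ∆ (M⁽ⁱ⁾+1)) = 2gᵢ+1`), then
each `M⁽ⁱ⁾` is a Maya diagram and `M` is `(p,k)`-cyclic with
`p = ∑ᵢ (2gᵢ+1) = #(M ∆ (M+k))`. -/
theorem maya_pk_cyclic_genus (k : ℕ) (hk : 1 ≤ k) (M : Set ℤ) (hM : IsMaya M)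
    (g : Fin k → ℕ)
    (hg : ∀ i, (symmDiff (modDecomp k M i) (shiftSet (modDecomp k M i) 1)).ncard
      = 2 * g i + 1) :
    (∀ i, IsMaya (modDecomp k M i)) ∧
    (symmDiff M (shiftSet M (k : ℤ))).Finite ∧
    (symmDiff M (shiftSet M (k : ℤ))).ncard = ∑ i, (2 * g i + 1) := by
  have hk0 : (0 : ℤ) < k := by exact_mod_cast hk
  have hinj : ∀ i : Fin k, Function.Injective (fun m : ℤ => (k : ℤ) * m + (i.val : ℤ)) := by
    intro i a b h
    have h' : (k : ℤ) * a = k * b := by simpa using h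
    exact mul_left_cancel₀ hk0.ne' h'
  have hmem : ∀ (N : Set ℤ) (t n : ℤ), n ∈ shiftSet N t ↔ n - t ∈ N := by
    intro N t n
    constructor
    · rintro ⟨m, hm, rfl⟩
      simpa using hm
    · intro h
      exact ⟨n - t, h, by simp⟩
  have key : ∀ (i : Fin k) (m : ℤ),
      m ∈ symmDiff (modDecomp k M i) (shiftSet (modDecomp k M i) 1) ↔
      (k : ℤ) * m + (i.val : ℤ) ∈ symmDiff M (shiftSet M (k : ℤ)) := by
    intro i m
    have e : (k : ℤ) * (m - 1) + (i.val : ℤ) = k * m + i.val - k := by ring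
    simp only [Set.mem_symmDiff, hmem, modDecomp, Set.mem_setOf_eq, e]
  have hfin : ∀ i, (symmDiff (modDecomp k M i) (shiftSet (modDecomp k M i) 1)).Finite := by
    intro i
    apply Set.finite_of_ncard_ne_zero
    rw [hg i]
    omega
  haveI : ∀ i, Finite (symmDiff (modDecomp k M i) (shiftSet (modDecomp k M i) 1) : Set ℤ) :=
    fun i => (hfin i).to_subtype
  let f : (Σ i, (symmDiff (modDecomp k M i) (shiftSet (modDecomp k M i) 1) : Set ℤ)) →
      (symmDiff M (shiftSet M (k : ℤ)) : Set ℤ) :=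
    fun x => ⟨(k : ℤ) * x.2.1 + (x.1.val : ℤ), (key x.1 x.2.1).1 x.2.2⟩
  have hf : Function.Bijective f := by
    constructor
    · rintro ⟨i, a, ha⟩ ⟨j, b, hb⟩ h
      have h1 : (k : ℤ) * a + (i.val : ℤ) = k * b + (j.val : ℤ) := congrArg Subtype.val h
      have hi : ((k : ℤ) * a + (i.val : ℤ)) % k = i.val := by
        rw [Int.mul_add_emod_self_left]
        exact Int.emod_eq_of_lt (by positivity) (by exact_mod_cast i.2)
      have hj : ((k : ℤ) * b + (j.val : ℤ)) % k = j.val := by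
        rw [Int.mul_add_emod_self_left]
        exact Int.emod_eq_of_lt (by positivity) (by exact_mod_cast j.2)
      have hij : i = j := by
        apply Fin.ext
        have : (i.val : ℤ) = j.val := by rw [← hi, ← hj, h1]
        exact_mod_cast this
      subst hij
      have hab : a = b := hinj i h1
      subst hab
      rfl
    · rintro ⟨n, hn⟩
      have h0 := Int.emod_nonneg n hk0.ne'
      have h1 := Int.emod_lt_of_pos n hk0
      let i : Fin k := ⟨(n % k).toNat, by omega⟩
      have e : (k : ℤ) * (n / k) + (i.val : ℤ) = n := by
        have : (i.val : ℤ) = n % k := Int.toNat_of_nonneg h0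
        rw [this]
        exact Int.mul_ediv_add_emod n k
      exact ⟨⟨i, n / k, (key i (n / k)).2 (by rw [e]; exact hn)⟩, Subtype.ext e⟩
  refine ⟨fun i => ⟨?_, ?_⟩, ?_, ?_⟩
  · refine (hM.1.preimage (hinj i).injOn).subset ?_
    rintro m ⟨h1, h2⟩
    exact ⟨h1, by positivity⟩
  · refine (hM.2.preimage (hinj i).injOn).subset ?_
    rintro m ⟨h1, h2⟩
    refine ⟨?_, h2⟩
    have : (i.val : ℤ) < k := by exact_mod_cast i.2
    show (k : ℤ) * m + (i.val : ℤ) < 0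
    nlinarith
  · exact Set.finite_coe_iff.1 (Finite.of_surjective f hf.2)
  · rw [← Nat.card_coe_set_eq, ← Nat.card_congr (Equiv.ofBijective f hf), Nat.card_sigma]
    exact Finset.sum_congr rfl fun i _ => by rw [Nat.card_coe_set_eq, hg i]
end
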